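/- For a tetrahedron T in ℝ³, the volume of T equals 2/5 times the volume of its difference body DT, and among all cones over convex bases the tetrahedron achieves the minimum ratio Vol(C)/Vol(DC) = 2/5. -/

import Mathlib

open MeasureTheory Pointwise
open scoped ENNReal

/-!
A cone over a convex base is a convex body, so both claims follow from the Rogers–Shephard
inequality `μ (K - K) ≤ (2n choose n) * μ K` for convex bodies in dimension `n`, with equality for
simplices. The covariogram `x ↦ μ (K ∩ (x + K))` of `K` has integral `(μ K)²`. Let `g` be the gauge
of `K - K`. If `l = g x ≤ 1`, then `x = l • (a - b)` with `a`, `b` in `K`, and convexity gives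
`l • a + (1 - l) • K ⊆ K ∩ (x + K)`, so the covariogram at `x` is at least `(1 - g x) ^ n * μ K`.
By the layer cake formula `(1 - g) ^ n` integrates over `{g ≤ 1}` to
`n * B(n, n + 1) * μ (K - K) = μ (K - K) / (2n choose n)`, and the inequality follows.
A simplex is cut out by `n + 1` barycentric inequalities, so its intersection with a translate is
again a homothet of it, and all these bounds are equalities. Halving `K - K` divides its measure
by `2 ^ n`, and for `n = 3` the resulting constant is `8 / 20 = 2 / 5`.
-/

section RogersShephard

open Module (finrank)
open ProbabilityTheory (beta)
open scoped Topology

section Beta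

lemma lintegral_Ioo_rpow_mul_one_sub_rpow {α β : ℝ} (hα : 0 < α) (hβ : 0 < β) :
    ∫⁻ t in Set.Ioo (0 : ℝ) 1, ENNReal.ofReal (t ^ (α - 1) * (1 - t) ^ (β - 1)) =
      ENNReal.ofReal (beta α β) := by
  have hB : 0 < beta α β := ProbabilityTheory.beta_pos hα hβ
  have hpdf := ProbabilityTheory.lintegral_betaPDF_eq_one hα hβ
  simp only [ProbabilityTheory.lintegral_betaPDF, mul_assoc,
    ENNReal.ofReal_mul (one_div_pos.2 hB).le] at hpdf
  rw [lintegral_const_mul' _ _ ENNReal.ofReal_ne_top, one_div, ENNReal.ofReal_inv_of_pos hB,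
    mul_comm] at hpdf
  rw [ENNReal.eq_inv_of_mul_eq_one_left hpdf, inv_inv]

lemma centralBinom_mul_beta {n : ℕ} (hn : 0 < n) :
    (n.centralBinom : ℝ) * (n * beta n (n + 1)) = 1 := by
  have hfac : (n.centralBinom : ℝ) * (n.factorial * n.factorial) = (2 * n).factorial := by
    have h := Nat.choose_mul_factorial_mul_factorial (Nat.le_mul_of_pos_left n two_pos)
    rw [two_mul, Nat.add_sub_cancel, ← two_mul, mul_assoc] at h
    exact_mod_cast h
  have hΓ : (n : ℝ) * Real.Gamma n = n.factorial := by
    rw [← Real.Gamma_add_one (by positivity), Real.Gamma_nat_eq_factorial]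
  have hΓ' : Real.Gamma (n + (n + 1)) = (2 * n).factorial := by
    rw [← Real.Gamma_nat_eq_factorial]; push_cast; ring_nf
  rw [ProbabilityTheory.beta, Real.Gamma_nat_eq_factorial, hΓ', ← mul_div_assoc,
    ← mul_assoc (n : ℝ), hΓ, ← mul_div_assoc, hfac, div_self (by positivity)]

end Beta

section Covariogram

variable {G : Type*} [AddCommGroup G]

lemma mem_inter_vadd_iff {K : Set G} {x y : G} : y ∈ K ∩ (x +ᵥ K) ↔ y ∈ K ∧ y - x ∈ K := by
  rw [Set.mem_inter_iff, Set.mem_vadd_set_iff_neg_vadd_mem, vadd_eq_add, neg_add_eq_sub]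

variable [MeasurableSpace G]

/-- The covariogram of `K`: the measure of the overlap of `K` with its translate by `x`. -/
noncomputable def covariogram (μ : Measure G) (K : Set G) (x : G) : ℝ≥0∞ :=
  μ (K ∩ (x +ᵥ K))

lemma lintegral_covariogram [MeasurableAdd₂ G] [MeasurableNeg G] {μ : Measure G} [SFinite μ]
    [μ.IsAddLeftInvariant] [μ.IsNegInvariant] {K : Set G} (hK : MeasurableSet K) :
    ∫⁻ x, covariogram μ K x ∂μ = μ K * μ K := by
  set S : Set (G × G) := {q | q.2 ∈ K ∧ q.2 - q.1 ∈ K}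
  have hS : MeasurableSet S :=
    (measurable_snd hK).inter ((measurable_snd.sub measurable_fst) hK)
  have hfiber (y : G) : μ ((·, y) ⁻¹' S) = K.indicator (fun _ ↦ μ K) y := by
    by_cases hy : y ∈ K
    · have hsec : (·, y) ⁻¹' S = (y - ·) ⁻¹' K := by ext x; simp [S, hy]
      rw [hsec, Set.indicator_of_mem hy]
      exact (Measure.measurePreserving_sub_left μ y).measure_preimage hK.nullMeasurableSet
    · have hsec : (·, y) ⁻¹' S = ∅ := by ext x; simp [S, hy]
      rw [hsec, Set.indicator_of_notMem hy, measure_empty]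
  calc ∫⁻ x, covariogram μ K x ∂μ
      = ∫⁻ x, μ (Prod.mk x ⁻¹' S) ∂μ :=
        lintegral_congr fun x ↦ congrArg μ (Set.ext fun y ↦ mem_inter_vadd_iff)
    _ = ∫⁻ y, μ ((·, y) ⁻¹' S) ∂μ := by
        rw [← Measure.prod_apply hS, Measure.prod_apply_symm hS]
    _ = μ K * μ K := by
        simp_rw [hfiber]
        rw [lintegral_indicator_const hK]

end Covariogram

section Gauge

lemma sub_self_mem_nhds_zero {G : Type*} [AddGroup G] [TopologicalSpace G]
    [IsTopologicalAddGroup G] {K : Set G} (hK : (interior K).Nonempty) : K - K ∈ 𝓝 (0 : G) := by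
  obtain ⟨k, hk⟩ := hK
  exact mem_interior_iff_mem_nhds.1 <|
    subset_interior_sub ⟨k, hk, k, hk, sub_self k⟩

lemma isCompact_sub {G : Type*} [AddGroup G] [TopologicalSpace G] [IsTopologicalAddGroup G]
    {s t : Set G} (hs : IsCompact s) (ht : IsCompact t) : IsCompact (s - t) := by
  rw [sub_eq_add_neg]
  exact hs.add ht.neg

section TVS

variable {E : Type*} [AddCommGroup E] [Module ℝ E] [TopologicalSpace E] [IsTopologicalAddGroup E]
  [ContinuousSMul ℝ E] [T2Space E] {D : Set E}

lemma gauge_le_iff_mem_smul (hD : Convex ℝ D) (hDc : IsCompact D) (hD₀ : D ∈ 𝓝 0) {r : ℝ}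
    (hr : 0 ≤ r) {x : E} : gauge D x ≤ r ↔ x ∈ r • D := by
  rcases hr.eq_or_lt with rfl | hr
  · rw [Set.zero_smul_set ⟨0, mem_of_mem_nhds hD₀⟩, Set.mem_zero, (gauge_nonneg x).ge_iff_eq',
      gauge_eq_zero (absorbent_nhds_zero hD₀) (hDc.isVonNBounded ℝ)]
  · rw [Set.mem_smul_set_iff_inv_smul_mem₀ hr.ne', ← hDc.isClosed.closure_eq,
      ← gauge_le_one_iff_mem_closure hD hD₀, gauge_smul_of_nonneg (inv_nonneg.2 hr.le),
      smul_eq_mul, inv_mul_le_one₀ hr, hDc.isClosed.closure_eq]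

end TVS

variable {E : Type*} [NormedAddCommGroup E] [NormedSpace ℝ E] [FiniteDimensional ℝ E]
  [MeasurableSpace E] [BorelSpace E] (μ : Measure E) [μ.IsAddHaarMeasure] {D : Set E}

lemma measure_le_one_sub_gauge (hD : Convex ℝ D) (hDc : IsCompact D) (hD₀ : D ∈ 𝓝 0) {t : ℝ}
    (ht : t ≤ 1) :
    μ {x | t ≤ 1 - gauge D x} = ENNReal.ofReal ((1 - t) ^ finrank ℝ E) * μ D := by
  simp_rw [le_sub_comm (a := t), gauge_le_iff_mem_smul hD hDc hD₀ (sub_nonneg.2 ht)]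
  exact Measure.addHaar_smul_of_nonneg μ (sub_nonneg.2 ht) D

lemma lintegral_one_sub_gauge_rpow (hD : Convex ℝ D) (hDc : IsCompact D) (hD₀ : D ∈ 𝓝 0) {p : ℝ}
    (hp : 0 < p) :
    ∫⁻ x, ENNReal.ofReal (1 - gauge D x) ^ p ∂μ =
      ENNReal.ofReal (p * beta p (finrank ℝ E + 1)) * μ D := by
  set n := finrank ℝ E with hn
  set f : E → ℝ := fun x ↦ max (1 - gauge D x) 0
  have hf : Continuous f := by
    have := continuous_gauge hD hD₀
    fun_prop
  have hlevel (t : ℝ) (ht : t ∈ Set.Ioi 0) :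
      μ {x | t ≤ f x} * ENNReal.ofReal (t ^ (p - 1)) =
        (Set.Iic 1).indicator
          (fun t ↦ μ D * ENNReal.ofReal (t ^ (p - 1) * (1 - t) ^ ((n + 1 : ℝ) - 1))) t := by
    rw [Set.mem_Ioi] at ht
    have hset : {x | t ≤ f x} = {x | t ≤ 1 - gauge D x} := by simp [f, ht.not_ge]
    rcases le_or_gt t 1 with ht₁ | ht₁
    · rw [Set.indicator_of_mem (Set.mem_Iic.2 ht₁), hset, measure_le_one_sub_gauge μ hD hDc hD₀ ht₁,
        add_sub_cancel_right, Real.rpow_natCast, ENNReal.ofReal_mul (by positivity), hn]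
      ring
    · have hempty : {x | t ≤ 1 - gauge D x} = ∅ :=
        Set.eq_empty_of_forall_notMem fun x hx ↦
          hx.not_gt ((sub_le_self 1 (gauge_nonneg x)).trans_lt ht₁)
      rw [Set.indicator_of_notMem (Set.notMem_Iic.2 ht₁), hset, hempty, measure_empty, zero_mul]
  calc ∫⁻ x, ENNReal.ofReal (1 - gauge D x) ^ p ∂μ
      = ∫⁻ x, ENNReal.ofReal (f x ^ p) ∂μ := lintegral_congr fun x ↦ by
        rw [← ENNReal.ofReal_rpow_of_nonneg (le_max_right _ _) hp.le, ENNReal.ofReal_max,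
          ENNReal.ofReal_zero, max_eq_left zero_le]
    _ = ENNReal.ofReal p *
          ∫⁻ t in Set.Ioi 0, μ {x | t ≤ f x} * ENNReal.ofReal (t ^ (p - 1)) :=
        lintegral_rpow_eq_lintegral_meas_le_mul μ (.of_forall fun x ↦ le_max_right _ _)
          hf.measurable.aemeasurable hp
    _ = ENNReal.ofReal p * (μ D * ENNReal.ofReal (beta p (n + 1))) := by
        rw [setLIntegral_congr_fun measurableSet_Ioi hlevel,
          setLIntegral_indicator measurableSet_Iic, Set.inter_comm, Set.Ioi_inter_Iic,
          ← restrict_Ioo_eq_restrict_Ioc, lintegral_const_mul' _ _ hDc.measure_ne_top,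
          lintegral_Ioo_rpow_mul_one_sub_rpow hp (by positivity)]
    _ = ENNReal.ofReal (p * beta p (n + 1)) * μ D := by
        rw [ENNReal.ofReal_mul hp.le]
        ring

lemma centralBinom_mul_lintegral_one_sub_gauge_pow (hD : Convex ℝ D) (hDc : IsCompact D)
    (hD₀ : D ∈ 𝓝 0) :
    (finrank ℝ E).centralBinom * ∫⁻ x, ENNReal.ofReal (1 - gauge D x) ^ finrank ℝ E ∂μ = μ D := by
  rcases (finrank ℝ E).eq_zero_or_pos with hn | hn
  · have := Module.finrank_zero_iff.1 hn
    have hDuniv : D = Set.univ := Subsingleton.eq_univ_of_nonempty ⟨0, mem_of_mem_nhds hD₀⟩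
    simp [hn, hDuniv]
  · simp_rw [← ENNReal.rpow_natCast]
    rw [lintegral_one_sub_gauge_rpow μ hD hDc hD₀ (Nat.cast_pos.2 hn), ← mul_assoc,
      ← ENNReal.ofReal_natCast, ← ENNReal.ofReal_mul (Nat.cast_nonneg _),
      centralBinom_mul_beta hn, ENNReal.ofReal_one, one_mul]

end Gauge

section ConvexBody

section Coord

variable {k V ι : Type*} [Ring k] [AddCommGroup V] [Module k V] (b : AffineBasis ι k V)

lemma coord_sub_eq_sub_coord_linear (i : ι) (x y : V) :
    b.coord i (y - x) = b.coord i y - (b.coord i).linear x := by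
  rw [sub_eq_neg_add, ← vadd_eq_add, AffineMap.map_vadd, map_neg, vadd_eq_add, neg_add_eq_sub]

lemma sum_coord_linear_eq_zero [Fintype ι] (x : V) : ∑ i, (b.coord i).linear x = 0 := by
  have h := b.sum_coord_apply_eq_one (x +ᵥ (0 : V))
  simp_rw [AffineMap.map_vadd, vadd_eq_add, Finset.sum_add_distrib] at h
  simpa [b.sum_coord_apply_eq_one] using h

lemma sum_coord_linear_smul [Fintype ι] (x : V) : ∑ i, (b.coord i).linear x • b i = x := by
  have h := b.linear_combination_coord_eq_self (x +ᵥ (0 : V))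
  simp_rw [AffineMap.map_vadd, vadd_eq_add, add_smul, Finset.sum_add_distrib,
    b.linear_combination_coord_eq_self] at h
  simpa using h

end Coord

section Homothets

variable {𝕜 E : Type*} [Field 𝕜] [LinearOrder 𝕜] [IsStrictOrderedRing 𝕜] [AddCommGroup E]
  [Module 𝕜 E] {K : Set E}

lemma vadd_smul_subset_inter_vadd (hK : Convex 𝕜 K) {l : 𝕜} (hl₀ : 0 ≤ l) (hl₁ : l ≤ 1) {a b : E}
    (ha : a ∈ K) (hb : b ∈ K) : l • a +ᵥ (1 - l) • K ⊆ K ∩ (l • (a - b) +ᵥ K) := by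
  rintro _ ⟨_, ⟨k, hk, rfl⟩, rfl⟩
  rw [mem_inter_vadd_iff]
  have hcomb {c : E} (hc : c ∈ K) : l • c + (1 - l) • k ∈ K :=
    hK hc hk hl₀ (sub_nonneg.2 hl₁) (add_sub_cancel l 1)
  refine ⟨hcomb ha, ?_⟩
  convert hcomb hb using 1
  simp only [vadd_eq_add, smul_sub]
  abel

lemma sum_smul_mem_smul_convexHull {ι : Type*} [Fintype ι] [Nonempty ι] {w : ι → 𝕜}
    (hw : ∀ i, 0 ≤ w i) (z : ι → E) :
    ∑ i, w i • z i ∈ (∑ i, w i) • convexHull 𝕜 (Set.range z) := by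
  rcases (Finset.sum_nonneg fun i _ ↦ hw i).eq_or_lt with hsum | hsum
  · have hw₀ (i : ι) : w i = 0 :=
      (Finset.sum_eq_zero_iff_of_nonneg fun i _ ↦ hw i).1 hsum.symm i (Finset.mem_univ i)
    rw [← hsum, Set.zero_smul_set (Set.range_nonempty z).convexHull]
    simp [hw₀]
  · refine ⟨Finset.univ.centerMass w z, Finset.univ.centerMass_mem_convexHull (fun i _ ↦ hw i) hsum
      fun i _ ↦ Set.mem_range_self i, ?_⟩
    exact smul_inv_smul₀ hsum.ne' _

variable {ι : Type*} (b : AffineBasis ι 𝕜 E)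

lemma posPart_coord_linear_le_coord {x y : E}
    (hy : y ∈ convexHull 𝕜 (Set.range b) ∩ (x +ᵥ convexHull 𝕜 (Set.range b))) (i : ι) :
    ((b.coord i).linear x)⁺ ≤ b.coord i y := by
  rw [mem_inter_vadd_iff, b.convexHull_eq_nonneg_coord] at hy
  refine sup_le ?_ (hy.1 i)
  rw [← sub_nonneg, ← coord_sub_eq_sub_coord_linear]
  exact hy.2 i

variable [Fintype ι]

lemma mem_smul_simplex_sub_simplex (x : E) :
    x ∈ (∑ i, ((b.coord i).linear x)⁺) •
      (convexHull 𝕜 (Set.range b) - convexHull 𝕜 (Set.range b)) := by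
  have := b.nonempty
  have hsum : ∑ i, ((b.coord i).linear x)⁻ = ∑ i, ((b.coord i).linear x)⁺ := by
    rw [← sub_eq_zero, ← neg_eq_zero, neg_sub, ← Finset.sum_sub_distrib]
    simp_rw [posPart_sub_negPart, sum_coord_linear_eq_zero]
  obtain ⟨u, hu, hu'⟩ :=
    sum_smul_mem_smul_convexHull (fun i ↦ posPart_nonneg ((b.coord i).linear x)) b
  obtain ⟨v, hv, hv'⟩ :=
    sum_smul_mem_smul_convexHull (fun i ↦ negPart_nonneg ((b.coord i).linear x)) b
  refine ⟨u - v, ⟨u, hu, v, hv, rfl⟩, ?_⟩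
  simp only [hsum] at hu' hv' ⊢
  rw [smul_sub, hu', hv', ← Finset.sum_sub_distrib]
  simp_rw [← sub_smul, posPart_sub_negPart, sum_coord_linear_smul]

lemma simplex_inter_vadd_subset (x : E) :
    convexHull 𝕜 (Set.range b) ∩ (x +ᵥ convexHull 𝕜 (Set.range b)) ⊆
      (∑ i, ((b.coord i).linear x)⁺ • b i) +ᵥ
        (1 - ∑ i, ((b.coord i).linear x)⁺) • convexHull 𝕜 (Set.range b) := by
  have := b.nonempty
  intro y hy
  have hmem := sum_smul_mem_smul_convexHull
    (fun i ↦ sub_nonneg.2 (posPart_coord_linear_le_coord b hy i)) b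
  rw [Finset.sum_sub_distrib, b.sum_coord_apply_eq_one] at hmem
  refine ⟨_, hmem, ?_⟩
  simp_rw [vadd_eq_add, sub_smul, Finset.sum_sub_distrib, b.linear_combination_coord_eq_self]
  abel

lemma sum_posPart_coord_linear_le_one {x : E}
    (hx : (convexHull 𝕜 (Set.range b) ∩ (x +ᵥ convexHull 𝕜 (Set.range b))).Nonempty) :
    ∑ i, ((b.coord i).linear x)⁺ ≤ 1 := by
  obtain ⟨y, hy⟩ := hx
  rw [← b.sum_coord_apply_eq_one y]
  exact Finset.sum_le_sum fun i _ ↦ posPart_coord_linear_le_coord b hy i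

end Homothets

variable {E : Type*} [NormedAddCommGroup E] [NormedSpace ℝ E] [FiniteDimensional ℝ E]
  [MeasurableSpace E] [BorelSpace E] (μ : Measure E) [μ.IsAddHaarMeasure] {K : Set E}

lemma measure_vadd_smul (w : E) {r : ℝ} (hr : 0 ≤ r) (s : Set E) :
    μ (w +ᵥ r • s) = ENNReal.ofReal r ^ finrank ℝ E * μ s := by
  rw [measure_vadd, Measure.addHaar_smul_of_nonneg μ hr, ENNReal.ofReal_pow hr]

lemma one_sub_gauge_pow_mul_le_covariogram (hK : Convex ℝ K) (hKc : IsCompact K)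
    (hK₀ : (interior K).Nonempty) (x : E) :
    ENNReal.ofReal (1 - gauge (K - K) x) ^ finrank ℝ E * μ K ≤ covariogram μ K x := by
  rcases le_or_gt (gauge (K - K) x) 1 with hx | hx
  · obtain ⟨_, ⟨a, ha, b, hb, rfl⟩, hab⟩ := (gauge_le_iff_mem_smul (hK.sub hK)
      (isCompact_sub hKc hKc) (sub_self_mem_nhds_zero hK₀) (gauge_nonneg x)).1 le_rfl
    rw [← measure_vadd_smul μ (gauge (K - K) x • a) (sub_nonneg.2 hx)]
    refine measure_mono ?_
    simpa only [hab] using vadd_smul_subset_inter_vadd hK (gauge_nonneg x) hx ha hb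
  · have hx₀ : x ≠ 0 := by
      rintro rfl
      exact hx.not_ge (gauge_zero.trans_le zero_le_one)
    have : Nontrivial E := ⟨x, 0, hx₀⟩
    rw [ENNReal.ofReal_of_nonpos (sub_nonpos.2 hx.le), zero_pow Module.finrank_pos.ne', zero_mul]
    exact zero_le

lemma covariogram_simplex {ι : Type*} (b : AffineBasis ι ℝ E) (x : E) :
    covariogram μ (convexHull ℝ (Set.range b)) x =
      ENNReal.ofReal
        (1 - gauge (convexHull ℝ (Set.range b) - convexHull ℝ (Set.range b)) x) ^ finrank ℝ E *
          μ (convexHull ℝ (Set.range b)) := by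
  have := b.finite
  have := Fintype.ofFinite ι
  set T := convexHull ℝ (Set.range b)
  have hT : (interior T).Nonempty := interior_convexHull_nonempty_iff_affineSpan_eq_top.2 b.tot
  refine le_antisymm ?_ (one_sub_gauge_pow_mul_le_covariogram μ (convex_convexHull ℝ _)
    ((Set.finite_range b).isCompact_convexHull ℝ) hT x)
  rcases (T ∩ (x +ᵥ T)).eq_empty_or_nonempty with hempty | hne
  · rw [covariogram, hempty, measure_empty]
    exact zero_le
  · set l := ∑ i, ((b.coord i).linear x)⁺
    calc covariogram μ T x
        ≤ μ ((∑ i, ((b.coord i).linear x)⁺ • b i) +ᵥ (1 - l) • T) :=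
          measure_mono (simplex_inter_vadd_subset b x)
      _ = ENNReal.ofReal (1 - l) ^ finrank ℝ E * μ T :=
          measure_vadd_smul μ _ (sub_nonneg.2 (sum_posPart_coord_linear_le_one b hne)) T
      _ ≤ ENNReal.ofReal (1 - gauge (T - T) x) ^ finrank ℝ E * μ T := by
          gcongr
          exact gauge_le_of_mem (Finset.sum_nonneg fun i _ ↦ posPart_nonneg _)
            (mem_smul_simplex_sub_simplex b x)

lemma measure_sub_self_mul_measure (hK : Convex ℝ K) (hKc : IsCompact K)
    (hK₀ : (interior K).Nonempty) :
    μ (K - K) * μ K = (finrank ℝ E).centralBinom *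
      ∫⁻ x, ENNReal.ofReal (1 - gauge (K - K) x) ^ finrank ℝ E * μ K ∂μ := by
  rw [lintegral_mul_const' _ _ hKc.measure_ne_top, ← mul_assoc (_ : ℝ≥0∞),
    centralBinom_mul_lintegral_one_sub_gauge_pow μ (hK.sub hK) (isCompact_sub hKc hKc)
      (sub_self_mem_nhds_zero hK₀)]

/-- The **Rogers–Shephard inequality**. -/
theorem measure_sub_self_le (hK : Convex ℝ K) (hKc : IsCompact K) (hK₀ : (interior K).Nonempty) :
    μ (K - K) ≤ (finrank ℝ E).centralBinom * μ K := by
  have hμ₀ : μ K ≠ 0 := (Measure.measure_pos_of_nonempty_interior μ hK₀).ne'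
  rw [← ENNReal.mul_le_mul_iff_left hμ₀ hKc.measure_ne_top,
    measure_sub_self_mul_measure μ hK hKc hK₀, mul_assoc, ← lintegral_covariogram hKc.measurableSet]
  gcongr with x
  exact one_sub_gauge_pow_mul_le_covariogram μ hK hKc hK₀ x

theorem measure_simplex_sub_simplex {ι : Type*} (b : AffineBasis ι ℝ E) :
    μ (convexHull ℝ (Set.range b) - convexHull ℝ (Set.range b)) =
      (finrank ℝ E).centralBinom * μ (convexHull ℝ (Set.range b)) := by
  have := b.finite
  set T := convexHull ℝ (Set.range b)
  have hT : (interior T).Nonempty := interior_convexHull_nonempty_iff_affineSpan_eq_top.2 b.tot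
  have hTc : IsCompact T := (Set.finite_range b).isCompact_convexHull ℝ
  have hμ₀ : μ T ≠ 0 := (Measure.measure_pos_of_nonempty_interior μ hT).ne'
  rw [← ENNReal.mul_left_inj hμ₀ hTc.measure_ne_top,
    measure_sub_self_mul_measure μ (convex_convexHull ℝ _) hTc hT, mul_assoc,
    ← lintegral_covariogram hTc.measurableSet]
  exact congrArg _ (lintegral_congr fun x ↦ (covariogram_simplex μ b x).symm)

end ConvexBody

section Cone

lemma isCompact_convexJoin {E : Type*} [AddCommGroup E] [Module ℝ E] [TopologicalSpace E]
    [ContinuousAdd E] [ContinuousSMul ℝ E] {s t : Set E} (hs : IsCompact s) (ht : IsCompact t) :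
    IsCompact (convexJoin ℝ s t) := by
  have himage : convexJoin ℝ s t =
      (fun q : ℝ × E × E ↦ (1 - q.1) • q.2.1 + q.1 • q.2.2) '' (Set.Icc 0 1 ×ˢ s ×ˢ t) := by
    ext z
    simp only [mem_convexJoin, segment_eq_image, Set.mem_image, Set.mem_prod, Prod.exists]
    tauto
  rw [himage]
  exact (isCompact_Icc.prod (hs.prod ht)).image (by fun_prop)

lemma isCompact_convexHull_union_singleton {E : Type*} [AddCommGroup E] [Module ℝ E]
    [TopologicalSpace E] [ContinuousAdd E] [ContinuousSMul ℝ E] {K : Set E} (hK : Convex ℝ K)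
    (hKc : IsCompact K) (v : E) :
    IsCompact (convexHull ℝ (K ∪ {v})) := by
  rcases K.eq_empty_or_nonempty with rfl | hne
  · simp
  · rw [Set.union_singleton, convexHull_insert hne, hK.convexHull_eq]
    exact isCompact_convexJoin isCompact_singleton hKc

lemma affineSpan_union_singleton_eq_top {k V P : Type*} [Field k] [AddCommGroup V] [Module k V]
    [FiniteDimensional k V] [AddTorsor V P] {K : Set P} (hne : K.Nonempty)
    (hK : finrank k V ≤ finrank k (vectorSpan k K) + 1) {v : P} (hv : v ∉ affineSpan k K) :
    affineSpan k (K ∪ {v}) = ⊤ := by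
  have hlt : affineSpan k K < affineSpan k (K ∪ {v}) :=
    (affineSpan_mono k Set.subset_union_left).lt_of_not_ge fun hle ↦
      hv (hle (mem_affineSpan k (Or.inr rfl)))
  have hfinrank := Submodule.finrank_lt_finrank_of_lt
    (AffineSubspace.direction_lt_of_nonempty hlt (hne.mono (subset_affineSpan k K)))
  rw [direction_affineSpan] at hfinrank
  exact (AffineSubspace.direction_eq_top_iff_of_nonempty ⟨v, mem_affineSpan k (Or.inr rfl)⟩).1 <|
    Submodule.eq_top_of_finrank_eq <| (Submodule.finrank_le _).antisymm (hK.trans hfinrank)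

end Cone

section DifferenceBody

variable {E : Type*} [NormedAddCommGroup E] [NormedSpace ℝ E]

/-- The difference body `DK = (1/2) (K - K)`: the half makes `DK` equal to `K` for convex `K`
symmetric about the origin. -/
def differenceBody (K : Set E) : Set E := (2⁻¹ : ℝ) • (K - K)

lemma isCompact_differenceBody {K : Set E} (hK : IsCompact K) : IsCompact (differenceBody K) :=
  (isCompact_sub hK hK).smul _

variable [FiniteDimensional ℝ E] [MeasurableSpace E] [BorelSpace E] (μ : Measure E)
  [μ.IsAddHaarMeasure] {K : Set E}

lemma two_pow_mul_measure_differenceBody (K : Set E) :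
    2 ^ finrank ℝ E * μ (differenceBody K) = μ (K - K) := by
  rw [differenceBody, Measure.addHaar_smul_of_nonneg μ (by positivity), ← mul_assoc,
    ENNReal.ofReal_pow (by positivity), ← mul_pow, ENNReal.ofReal_inv_of_pos two_pos,
    ENNReal.ofReal_ofNat, ENNReal.mul_inv_cancel two_ne_zero ENNReal.ofNat_ne_top, one_pow, one_mul]

lemma measure_differenceBody_pos (hK₀ : (interior K).Nonempty) : 0 < μ (differenceBody K) := by
  have hpos := Measure.measure_pos_of_mem_nhds μ (sub_self_mem_nhds_zero hK₀)
  rw [← two_pow_mul_measure_differenceBody] at hpos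
  exact pos_of_mul_pos_right hpos zero_le

theorem measure_simplex_eq_mul_measure_differenceBody {ι : Type*} (b : AffineBasis ι ℝ E) :
    μ (convexHull ℝ (Set.range b)) = 2 ^ finrank ℝ E / (finrank ℝ E).centralBinom *
      μ (differenceBody (convexHull ℝ (Set.range b))) := by
  rw [← ENNReal.mul_div_right_comm, two_pow_mul_measure_differenceBody,
    measure_simplex_sub_simplex, mul_comm,
    ENNReal.mul_div_cancel_right (mod_cast Nat.centralBinom_ne_zero _) (ENNReal.natCast_ne_top _)]

theorem two_pow_div_centralBinom_le_measureReal_div (hK : Convex ℝ K) (hKc : IsCompact K)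
    (hK₀ : (interior K).Nonempty) :
    (2 ^ finrank ℝ E / (finrank ℝ E).centralBinom : ℝ) ≤
      μ.real K / μ.real (differenceBody K) := by
  have hle : 2 ^ finrank ℝ E * μ (differenceBody K) ≤ (finrank ℝ E).centralBinom * μ K :=
    (two_pow_mul_measure_differenceBody μ K).trans_le (measure_sub_self_le μ hK hKc hK₀)
  have hle_real : 2 ^ finrank ℝ E * μ.real (differenceBody K) ≤
      (finrank ℝ E).centralBinom * μ.real K := by
    simpa [Measure.real] using ENNReal.toReal_mono
      (ENNReal.mul_ne_top (ENNReal.natCast_ne_top _) hKc.measure_ne_top) hle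
  have hpos : 0 < μ.real (differenceBody K) := ENNReal.toReal_pos
    (measure_differenceBody_pos μ hK₀).ne' (isCompact_differenceBody hKc).measure_ne_top
  rwa [div_le_div_iff₀ (mod_cast Nat.centralBinom_pos _) hpos, mul_comm (μ.real K)]

theorem tetrahedron_diff_body_ratio_general {n : ℕ} (hn : finrank ℝ E = n) {p : Fin (n + 1) → E}
    (hp : AffineIndependent ℝ p) :
    μ (convexHull ℝ (Set.range p)) =
        2 ^ n / n.centralBinom * μ (differenceBody (convexHull ℝ (Set.range p))) ∧
      ∀ K : Set E, Convex ℝ K → IsCompact K → (interior K).Nonempty →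
        (2 ^ n / n.centralBinom : ℝ) ≤ μ.real K / μ.real (differenceBody K) := by
  subst hn
  let b : AffineBasis (Fin (finrank ℝ E + 1)) ℝ E :=
    ⟨p, hp, hp.affineSpan_eq_top_iff_card_eq_finrank_add_one.2 (Fintype.card_fin _)⟩
  exact ⟨measure_simplex_eq_mul_measure_differenceBody μ b, fun _ hK hKc hK₀ ↦
    two_pow_div_centralBinom_le_measureReal_div μ hK hKc hK₀⟩

end DifferenceBody

end RogersShephard

/-- For a tetrahedron `T` (convex hull of four affinely independent points in `ℝ³`),
`Vol(T) = (2/5) · Vol(DT)` where `DT = (1/2) • (T - T)` is the difference body; moreover,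
among all cones `C = conv (K ∪ {v})` over 2-dimensional convex bases the tetrahedron
achieves the minimum ratio `Vol(C)/Vol(DC) = 2/5`, i.e. every such cone satisfies
`Vol(C)/Vol(DC) ≥ 2/5`. -/
theorem tetrahedron_diff_body_ratio
    (p : Fin 4 → EuclideanSpace ℝ (Fin 3)) (hp : AffineIndependent ℝ p) :
    volume (convexHull ℝ (Set.range p)) =
      (2 / 5 : ℝ≥0∞) *
        volume ((2⁻¹ : ℝ) •
          (convexHull ℝ (Set.range p) - convexHull ℝ (Set.range p))) ∧
    (∀ (H : AffineSubspace ℝ (EuclideanSpace ℝ (Fin 3))),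
      Module.finrank ℝ H.direction = 2 →
      ∀ (K : Set (EuclideanSpace ℝ (Fin 3))), IsCompact K → Convex ℝ K →
        K ⊆ (H : Set (EuclideanSpace ℝ (Fin 3))) → affineSpan ℝ K = H →
      ∀ (v : EuclideanSpace ℝ (Fin 3)), v ∉ H →
        (2 / 5 : ℝ) ≤
          (volume (convexHull ℝ (K ∪ {v}))).toReal /
            (volume ((2⁻¹ : ℝ) •
              (convexHull ℝ (K ∪ {v}) - convexHull ℝ (K ∪ {v})))).toReal) := by
  have hE : Module.finrank ℝ (EuclideanSpace ℝ (Fin 3)) = 3 := finrank_euclideanSpace_fin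
  have hbinom : Nat.centralBinom 3 = 20 := rfl
  have hratio : (2 ^ 3 / (20 : ℕ) : ℝ≥0∞) = 2 / 5 := by
    rw [ENNReal.div_eq_div_iff] <;> norm_num
  obtain ⟨hsimplex, hbody⟩ := tetrahedron_diff_body_ratio_general volume hE hp
  rw [hbinom] at hsimplex hbody
  refine ⟨hratio ▸ hsimplex, ?_⟩
  rintro H hH K hKc hK - rfl v hv
  have hne : K.Nonempty := Set.nonempty_iff_ne_empty.2 <| by
    rintro rfl
    rw [direction_affineSpan, vectorSpan_empty, finrank_bot] at hH
    exact two_ne_zero hH.symm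
  have hspan : affineSpan ℝ (K ∪ {v}) = ⊤ := affineSpan_union_singleton_eq_top hne
    (by rw [← direction_affineSpan, hH, hE]) hv
  refine le_of_eq_of_le (by norm_num) <| hbody _ (convex_convexHull ℝ _)
    (isCompact_convexHull_union_singleton hK hKc v) ?_
  exact interior_convexHull_nonempty_iff_affineSpan_eq_top.2 hspan
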